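/- The real algebra generated by two elements a, b with relations ba = a⁻¹b and b² = -1, acting on V = ℝ[t]/(p) ⊕ b·ℝ[t]/(p) with p = (t-c)(t-c̄), cc̄ = 1, c = e + if, f ≠ 0 (a acting as multiplication by t on the first summand), contains the anticommuting pair {b, J} with J = f⁻¹(a - e), J² = -1, b² = -1, bJ = -Jb; hence this representation makes V a module over the quaternion algebra ℍ, and V is isomorphic to ℍ as an ℍ-module (it is 4-dimensional over ℝ with basis {1, J, b·1, bJ}). -/

import Mathlib

open Polynomial

/-- `ℝ[t]/(p)` for `p = t² - 2et + 1` (i.e. `p = (t-c)(t-c̄)` with `c = e+if`,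
`cc̄ = 1`). -/
noncomputable abbrev QuotP (e : ℝ) :=
  ℝ[X] ⧸ Ideal.span ({(X ^ 2 - C (2 * e) * X + 1 : ℝ[X])} : Set ℝ[X])

/-- The class of `t`. -/
noncomputable def tbar (e : ℝ) : QuotP e :=
  Ideal.Quotient.mk _ (X : ℝ[X])

/-- `a` acts by multiplication by `t` on the first summand and by
`t⁻¹ = 2e - t` on the second. -/
noncomputable def aEnd (e : ℝ) : Module.End ℝ (QuotP e × QuotP e) :=
  (LinearMap.mulLeft ℝ (tbar e)).prodMap
    (LinearMap.mulLeft ℝ (algebraMap ℝ (QuotP e) (2 * e) - tbar e))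

/-- `b (u, v) = (-v, u)`. -/
noncomputable def bEnd (e : ℝ) : Module.End ℝ (QuotP e × QuotP e) :=
  LinearMap.prod (-(LinearMap.snd ℝ (QuotP e) (QuotP e))) (LinearMap.fst ℝ (QuotP e) (QuotP e))

/-- `J = f⁻¹ (a - e)`. -/
noncomputable def JEnd (e f : ℝ) : Module.End ℝ (QuotP e × QuotP e) :=
  f⁻¹ • (aEnd e - e • 1)

/-- The quaternion `i`. -/
noncomputable def qI : Quaternion ℝ := ⟨0, 1, 0, 0⟩

/-- The quaternion `j`. -/
noncomputable def qJ : Quaternion ℝ := ⟨0, 0, 1, 0⟩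

open scoped Quaternion

theorem quotP_smul_def {e : ℝ} (r : ℝ) (x : QuotP e) :
    r • x = algebraMap ℝ (QuotP e) r * x :=
  Algebra.smul_def r x

/-- The class of `f⁻¹ (t - e)` in `ℝ[t]/(p)`. -/
noncomputable def quotPI (e f : ℝ) : QuotP e :=
  algebraMap ℝ (QuotP e) f⁻¹ * (tbar e - algebraMap ℝ (QuotP e) e)

theorem tbar_sq (e : ℝ) :
    tbar e ^ 2 - algebraMap ℝ (QuotP e) (2 * e) * tbar e + 1 = 0 :=
  Ideal.Quotient.eq_zero_iff_mem.mpr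
    (Ideal.subset_span (Set.mem_singleton (X ^ 2 - C (2 * e) * X + 1 : ℝ[X])))

theorem quotPI_mul_self {e f : ℝ} (hf : f ≠ 0) (hef : e ^ 2 + f ^ 2 = 1) :
    quotPI e f * quotPI e f = -1 := by
  have h : (tbar e - algebraMap ℝ (QuotP e) e) * (tbar e - algebraMap ℝ (QuotP e) e) =
      algebraMap ℝ (QuotP e) (-f ^ 2) := by
    have hf2 : -f ^ 2 = e ^ 2 - 1 := by linarith
    have ht := tbar_sq e
    simp only [hf2, map_mul, map_sub, map_pow, map_one, map_ofNat] at ht ⊢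
    linear_combination ht
  rw [quotPI, mul_mul_mul_comm, h, ← map_mul, ← map_mul,
    show f⁻¹ * f⁻¹ * -f ^ 2 = -1 by field_simp, map_neg, map_one]

theorem JEnd_apply (e f : ℝ) (v : QuotP e × QuotP e) :
    JEnd e f v = (quotPI e f * v.1, -(quotPI e f * v.2)) := by
  have h : JEnd e f v = (f⁻¹ • (tbar e * v.1 - e • v.1),
      f⁻¹ • ((algebraMap ℝ (QuotP e) (2 * e) - tbar e) * v.2 - e • v.2)) := rfl
  rw [h]
  simp only [quotP_smul_def, quotPI, map_mul, map_ofNat]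
  ext <;> ring

theorem bEnd_apply (e : ℝ) (v : QuotP e × QuotP e) : bEnd e v = (-v.2, v.1) := rfl

/-- Evaluation at `c = e + if`, as a map `ℝ[t]/(p) → ℂ`. -/
noncomputable def quotPToComplex {e f : ℝ} (hef : e ^ 2 + f ^ 2 = 1) : QuotP e →ₐ[ℝ] ℂ :=
  Ideal.Quotient.liftₐ _ (aeval (⟨e, f⟩ : ℂ)) fun a ha => by
    obtain ⟨q, rfl⟩ := Ideal.mem_span_singleton'.mp ha
    have h : aeval (⟨e, f⟩ : ℂ) (X ^ 2 - C (2 * e) * X + 1 : ℝ[X]) = 0 := by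
      apply Complex.ext
      · simp [pow_two]
        linarith
      · simp [pow_two]
        ring
    rw [map_mul, h, mul_zero]

theorem quotPToComplex_tbar {e f : ℝ} (hef : e ^ 2 + f ^ 2 = 1) :
    quotPToComplex hef (tbar e) = ⟨e, f⟩ :=
  aeval_X (R := ℝ) (⟨e, f⟩ : ℂ)

theorem quotPToComplex_quotPI {e f : ℝ} (hf : f ≠ 0) (hef : e ^ 2 + f ^ 2 = 1) :
    quotPToComplex hef (quotPI e f) = Complex.I := by
  rw [quotPI, map_mul, map_sub, quotPToComplex_tbar, AlgHom.commutes, AlgHom.commutes]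
  apply Complex.ext <;> simp [hf]

/-- `ℝ[t]/(p)` is the field of complex numbers. -/
noncomputable def quotPEquivComplex {e f : ℝ} (hf : f ≠ 0) (hef : e ^ 2 + f ^ 2 = 1) :
    QuotP e ≃ₐ[ℝ] ℂ :=
  AlgEquiv.ofAlgHom (quotPToComplex hef) (Complex.lift ⟨quotPI e f, quotPI_mul_self hf hef⟩)
    (by
      apply Complex.algHom_ext
      simp [quotPToComplex_quotPI hf hef])
    (by
      apply Ideal.Quotient.algHom_ext
      apply Polynomial.algHom_ext
      change Complex.lift _ (quotPToComplex hef (tbar e)) = tbar e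
      rw [quotPToComplex_tbar, Complex.lift_apply, Complex.liftAux_apply]
      change algebraMap ℝ (QuotP e) e + f • quotPI e f = tbar e
      rw [quotP_smul_def, quotPI, ← mul_assoc, ← map_mul, mul_inv_cancel₀ hf, map_one]
      ring)

theorem quotPEquivComplex_quotPI {e f : ℝ} (hf : f ≠ 0) (hef : e ^ 2 + f ^ 2 = 1) :
    quotPEquivComplex hf hef (quotPI e f) = Complex.I :=
  quotPToComplex_quotPI hf hef

/-- The quaternions as `ℂ ⊕ jℂ`. -/
noncomputable def complexProdEquivQuaternion : (ℂ × ℂ) ≃ₗ[ℝ] Quaternion ℝ where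
  toFun z := ⟨z.1.re, z.1.im, z.2.re, -z.2.im⟩
  invFun q := (⟨q.re, q.imI⟩, ⟨q.imJ, -q.imK⟩)
  map_add' z w := Quaternion.ext _ _ rfl rfl rfl (neg_add _ _)
  map_smul' r z := by
    ext
    · exact Complex.smul_re r z.1
    · exact Complex.smul_im r z.1
    · exact Complex.smul_re r z.2
    · exact (congrArg Neg.neg (Complex.smul_im r z.2)).trans (smul_neg r z.2.im).symm
  left_inv z := by simp
  right_inv q := Quaternion.ext _ _ rfl rfl rfl (neg_neg _)

@[simp] theorem re_complexProdEquivQuaternion (z : ℂ × ℂ) :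
    (complexProdEquivQuaternion z).re = z.1.re := rfl

@[simp] theorem imI_complexProdEquivQuaternion (z : ℂ × ℂ) :
    (complexProdEquivQuaternion z).imI = z.1.im := rfl

@[simp] theorem imJ_complexProdEquivQuaternion (z : ℂ × ℂ) :
    (complexProdEquivQuaternion z).imJ = z.2.re := rfl

@[simp] theorem imK_complexProdEquivQuaternion (z : ℂ × ℂ) :
    (complexProdEquivQuaternion z).imK = -z.2.im := rfl

@[simp] theorem re_qI : qI.re = 0 := rfl

@[simp] theorem imI_qI : qI.imI = 1 := rfl

@[simp] theorem imJ_qI : qI.imJ = 0 := rfl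

@[simp] theorem imK_qI : qI.imK = 0 := rfl

@[simp] theorem re_qJ : qJ.re = 0 := rfl

@[simp] theorem imI_qJ : qJ.imI = 0 := rfl

@[simp] theorem imJ_qJ : qJ.imJ = 1 := rfl

@[simp] theorem imK_qJ : qJ.imK = 0 := rfl

theorem complexProdEquivQuaternion_I (z : ℂ × ℂ) :
    complexProdEquivQuaternion (Complex.I * z.1, -(Complex.I * z.2)) =
      qI * complexProdEquivQuaternion z := by
  ext <;> simp

theorem complexProdEquivQuaternion_J (z : ℂ × ℂ) :
    complexProdEquivQuaternion (-z.2, z.1) = qJ * complexProdEquivQuaternion z := by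
  ext <;> simp

/-- The isomorphism `V ≃ ℍ` sending `(1, 0)` to `1`. -/
noncomputable def quotPProdEquivQuaternion {e f : ℝ} (hf : f ≠ 0) (hef : e ^ 2 + f ^ 2 = 1) :
    (QuotP e × QuotP e) ≃ₗ[ℝ] Quaternion ℝ :=
  ((quotPEquivComplex hf hef).toLinearEquiv.prodCongr
    (quotPEquivComplex hf hef).toLinearEquiv).trans complexProdEquivQuaternion

theorem quotPProdEquivQuaternion_apply {e f : ℝ} (hf : f ≠ 0) (hef : e ^ 2 + f ^ 2 = 1)
    (v : QuotP e × QuotP e) :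
    quotPProdEquivQuaternion hf hef v = complexProdEquivQuaternion
      (quotPEquivComplex hf hef v.1, quotPEquivComplex hf hef v.2) := rfl

theorem quotPProdEquivQuaternion_one {e f : ℝ} (hf : f ≠ 0) (hef : e ^ 2 + f ^ 2 = 1) :
    quotPProdEquivQuaternion hf hef (1, 0) = 1 := by
  rw [quotPProdEquivQuaternion_apply, map_one, map_zero]
  ext <;> simp

theorem quotPProdEquivQuaternion_JEnd {e f : ℝ} (hf : f ≠ 0) (hef : e ^ 2 + f ^ 2 = 1)
    (v : QuotP e × QuotP e) :
    quotPProdEquivQuaternion hf hef (JEnd e f v) = qI * quotPProdEquivQuaternion hf hef v := by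
  simp only [quotPProdEquivQuaternion_apply, JEnd_apply, map_neg, map_mul,
    quotPEquivComplex_quotPI, ← complexProdEquivQuaternion_I]

theorem quotPProdEquivQuaternion_bEnd {e f : ℝ} (hf : f ≠ 0) (hef : e ^ 2 + f ^ 2 = 1)
    (v : QuotP e × QuotP e) :
    quotPProdEquivQuaternion hf hef (bEnd e v) = qJ * quotPProdEquivQuaternion hf hef v := by
  simp only [quotPProdEquivQuaternion_apply, bEnd_apply, map_neg,
    ← complexProdEquivQuaternion_J]

theorem linearIndependent_quaternion_units :
    LinearIndependent ℝ ![(1 : Quaternion ℝ), qI, qJ, qI * qJ] := by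
  rw [Fintype.linearIndependent_iff]
  intro g hg
  have hre := congrArg QuaternionAlgebra.re hg
  have hi := congrArg QuaternionAlgebra.imI hg
  have hj := congrArg QuaternionAlgebra.imJ hg
  have hk := congrArg QuaternionAlgebra.imK hg
  simp only [Fin.sum_univ_four, Matrix.cons_val] at hre hi hj hk
  simp at hre hi hj hk
  intro i
  fin_cases i <;> assumption

theorem linearIndependent_JEnd_bEnd {e f : ℝ} (hf : f ≠ 0) (hef : e ^ 2 + f ^ 2 = 1) :
    LinearIndependent ℝ
      ![((1 : QuotP e), (0 : QuotP e)), JEnd e f (1, 0), bEnd e (1, 0),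
        JEnd e f (bEnd e (1, 0))] := by
  apply LinearIndependent.of_comp (quotPProdEquivQuaternion hf hef).toLinearMap
  convert linearIndependent_quaternion_units using 1
  funext i
  fin_cases i
  · exact quotPProdEquivQuaternion_one hf hef
  · exact (quotPProdEquivQuaternion_JEnd hf hef _).trans
      (by rw [quotPProdEquivQuaternion_one, mul_one]; rfl)
  · exact (quotPProdEquivQuaternion_bEnd hf hef _).trans
      (by rw [quotPProdEquivQuaternion_one, mul_one]; rfl)
  · exact (quotPProdEquivQuaternion_JEnd hf hef _).trans
      (by rw [quotPProdEquivQuaternion_bEnd, quotPProdEquivQuaternion_one, mul_one]; rfl)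

theorem finrank_quotPProd {e f : ℝ} (hf : f ≠ 0) (hef : e ^ 2 + f ^ 2 = 1) :
    Module.finrank ℝ (QuotP e × QuotP e) = 4 :=
  (quotPProdEquivQuaternion hf hef).finrank_eq.trans Quaternion.finrank_eq_four

/-- On `V = ℝ[t]/(p) ⊕ b·ℝ[t]/(p)` with `p = (t-c)(t-c̄)`, `cc̄ = 1`,
`c = e + if`, `f ≠ 0`: the pair `{b, J}` with `J = f⁻¹(a - e)` anticommutes and
satisfies `J² = b² = -1`, so `V` is a quaternion module; moreover `V` is
4-dimensional over `ℝ` with basis `{1, J·1, b·1, J(b·1)}` and is isomorphic to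
`ℍ` as an `ℍ`-module. -/
theorem stmt10 (e f : ℝ) (hf : f ≠ 0) (hef : e ^ 2 + f ^ 2 = 1) :
    JEnd e f * JEnd e f = -1 ∧
    bEnd e * bEnd e = -1 ∧
    bEnd e * JEnd e f = -(JEnd e f * bEnd e) ∧
    (LinearIndependent ℝ
        ![((1 : QuotP e), (0 : QuotP e)), JEnd e f (1, 0), bEnd e (1, 0),
          JEnd e f (bEnd e (1, 0))] ∧
      Submodule.span ℝ
        {((1 : QuotP e), (0 : QuotP e)), JEnd e f (1, 0), bEnd e (1, 0),
          JEnd e f (bEnd e (1, 0))} = ⊤) ∧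
    Module.finrank ℝ (QuotP e × QuotP e) = 4 ∧
    ∃ φ : (QuotP e × QuotP e) ≃ₗ[ℝ] Quaternion ℝ,
      (∀ v, φ (JEnd e f v) = qI * φ v) ∧
      (∀ v, φ (bEnd e v) = qJ * φ v) := by
  have hj := quotPI_mul_self hf hef
  refine ⟨?_, ?_, ?_, ⟨?_, ?_⟩, ?_, quotPProdEquivQuaternion hf hef,
    quotPProdEquivQuaternion_JEnd hf hef, quotPProdEquivQuaternion_bEnd hf hef⟩
  · refine LinearMap.ext fun v => ?_
    rw [Module.End.mul_apply, JEnd_apply, JEnd_apply]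
    refine Prod.ext ?_ ?_
    · change quotPI e f * (quotPI e f * v.1) = -v.1
      linear_combination v.1 * hj
    · change -(quotPI e f * -(quotPI e f * v.2)) = -v.2
      linear_combination v.2 * hj
  · rfl
  · refine LinearMap.ext fun v => ?_
    rw [LinearMap.neg_apply, Module.End.mul_apply, Module.End.mul_apply, JEnd_apply, bEnd_apply,
      bEnd_apply, JEnd_apply]
    refine Prod.ext ?_ ?_
    · change - -(quotPI e f * v.2) = -(quotPI e f * -v.2)
      ring
    · change quotPI e f * v.1 = - -(quotPI e f * v.1)
      ring
  · exact linearIndependent_JEnd_bEnd hf hef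
  · have h := (linearIndependent_JEnd_bEnd hf hef).span_eq_top_of_card_eq_finrank
      (by rw [finrank_quotPProd hf hef, Fintype.card_fin])
    simpa only [Matrix.range_cons, Matrix.range_empty, Set.union_empty,
      Set.singleton_union] using h
  · exact finrank_quotPProd hf hef
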